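/- arXiv:1708.01113 — 2 statements merged into one kernel-verified Lean document; each statement's English description precedes it below -/
import Mathlib

section
/- Let P be a vector space partition of F_q^v of type d_l^{u_l}⋯d_2^{u_2}d_1^{u_1}, where u_1, u_2 > 0 and d_l > ⋯ > d_2 > d_1 ≥ 1, and suppose that d_2 − d_1 = a·d_1 + b for integers a ≥ 1 and 0 < b < d_1 (in particular d_1 does not divide d_2 − d_1). Then u_1 ≥ (q^{(a+2)d_1}−1)/(q^{d_1}−1). -/
open Module

lemma itb_arith (n K A B C s m t w : ℤ) (hK : 4 ≤ K) (hA : K ≤ A) (hB : 2 ≤ B) 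
    (hBC : B * C = K) (hw : A - 1 = (K - 1) * w) (hn : 0 < n)
    (hnm : n = m * (A * B) + s) (hs0 : 0 ≤ s) (hm0 : 0 ≤ m)
    (ht : t = n - s * K) (ht0 : 0 ≤ t)
    (hvar : t * (A * B * K - t) ≤ n * (K - 1)) : A * K ^ 2 - 1 ≤ n * (K - 1) := by
  by_contra hcon
  push Not at hcon
  have hAK : 16 ≤ A * K := by nlinarith
  have hABK : 2 * (A * K) ≤ A * B * K := by nlinarith
  have htn : t ≤ n := by nlinarith
  have hn2 : n ≤ A * B * K - K := by
    by_contra h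
    push Not at h
    have : (2 * (A * K) - K) * (K - 1) ≤ n * (K - 1) := by
      apply mul_le_mul_of_nonneg_right <;> linarith
    have h2 : 0 < K * ((A - 1) * (K - 2) - 1) := by
      have : 6 ≤ (A - 1) * (K - 2) := by nlinarith
      apply mul_pos <;> linarith
    nlinarith
  have htK : t < K := by
    by_contra h
    push Not at h
    have h1 : 0 ≤ (t - K) * (A * B * K - K - t) := mul_nonneg (by linarith) (by linarith)
    have h2 : K * (2 * (A * K) - K) ≤ K * (A * B * K - K) := by
      apply mul_le_mul_of_nonneg_left <;> linarith
    have h3 : 0 ≤ K ^ 2 * (A - 1) := mul_nonneg (by positivity) (by linarith)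
    nlinarith
  have hmC : m ≤ C := by
    by_contra h
    push Not at h
    have h1 : K + 2 ≤ m * B := by nlinarith
    have h2 : A * (K - 1) * (K + 2) ≤ A * (K - 1) * (m * B) := by
      apply mul_le_mul_of_nonneg_left h1
      apply mul_nonneg <;> linarith
    have h3 : 0 ≤ s * (K - 1) := mul_nonneg hs0 (by linarith)
    have h4 : n * (K - 1) = A * (K - 1) * (m * B) + s * (K - 1) := by rw [hnm]; ring
    nlinarith
  have hdiv : (K - 1) ∣ m * B - t := by
    refine ⟨s - m * B * w, ?_⟩
    have : A = 1 + (K - 1) * w := by linarith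
    subst ht
    rw [hnm, this]; ring
  have hm1 : 1 ≤ m := by
    by_contra h
    have : m = 0 := by linarith
    subst this
    nlinarith
  have hnK : n * (K - 1) = m * B * (A * K) - t := by
    rw [ht]
    have : s = n - m * (A * B) := by linarith
    rw [this]; ring
  rcases hmC.lt_or_eq with hlt | heq
  · have h1 : m * B ≤ K - 2 := by nlinarith
    have h2 : 2 ≤ m * B := by nlinarith
    have h3 : m * B - t = 0 := by
      apply Int.eq_zero_of_abs_lt_dvd hdiv
      rw [abs_lt]; constructor <;> linarith
    have h4 : t = m * B := by linarith
    rw [hnK, ← h4] at hvar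
    have h5 : t * (A * B * K - t) ≤ t * (A * K - 1) := by linarith
    have h6 := le_of_mul_le_mul_left h5 (by linarith)
    nlinarith
  · have h1 : m * B = K := by rw [heq, mul_comm]; exact hBC
    rw [h1] at hdiv hnK
    have h3 : 1 - t = 0 := by
      apply Int.eq_zero_of_abs_lt_dvd (m := K - 1)
      · have := dvd_sub hdiv (dvd_refl (K - 1))
        have e : K - t - (K - 1) = 1 - t := by ring
        rwa [e] at this
      rw [abs_lt]; constructor
      · by_contra h
        have : t = K ∨ t = K - 1 + 1 := by left; linarith
        rcases this with h | h <;> linarith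
      · linarith
    nlinarith

lemma itb_sum {D : Type*} [Fintype D] [Nonempty D] (α : D → ℤ) (n K R Q : ℤ)
    (hQ : Q = Fintype.card D)
    (hR : 0 < R) (hα : ∀ f, 0 ≤ α f) (hdvd : ∀ f, R ∣ n - α f)
    (h1 : (∑ f, α f) * K = n * Q)
    (h2 : (∑ f, α f ^ 2) * K ^ 2 = n * K * Q + n * (n - 1) * Q) (hK : 0 < K) :
    0 ≤ n - (n % R) * K ∧
    (n - (n % R) * K) * (R * K - (n - (n % R) * K)) ≤ n * (K - 1) := by
  have hQ0 : 0 < Q := by rw [hQ]; exact_mod_cast Fintype.card_pos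
  set s := n % R with hs
  have hle : ∀ f, s ≤ α f := fun f => by
    have h : α f % R = s := (Int.emod_eq_emod_iff_emod_sub_eq_zero.2 (Int.emod_eq_zero_of_dvd (hdvd f))).symm
    have h2 := Int.mul_ediv_add_emod (α f) R
    have h3 := mul_nonneg hR.le (Int.ediv_nonneg (hα f) hR.le)
    linarith
  have hds : ∀ f, R ∣ α f - s := fun f => by
    have h : R ∣ n - s := Int.dvd_self_sub_emod
    have := dvd_sub h (hdvd f)
    have e : n - s - (n - α f) = α f - s := by ring
    rwa [e] at this
  constructor
  · have : ∑ f : D, s ≤ ∑ f, α f := Finset.sum_le_sum fun f _ => hle f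
    rw [Finset.sum_const, Finset.card_univ, nsmul_eq_mul, ← hQ] at this
    have h3 : Q * s * K ≤ n * Q := by rw [← h1]; exact mul_le_mul_of_nonneg_right this hK.le
    have h4 : 0 ≤ Q * (n - s * K) := by linarith
    exact nonneg_of_mul_nonneg_right h4 hQ0
  · have h3 : ∀ f, 0 ≤ (α f - s) * (α f - s - R) := fun f => by
      obtain ⟨c, hc⟩ := hds f
      rw [hc]
      have : R * c * (R * c - R) = R ^ 2 * (c * (c - 1)) := by ring
      rw [this]
      apply mul_nonneg (by positivity)
      rcases le_or_gt c 0 with h | h <;> nlinarith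
    have h4 : 0 ≤ ∑ f, (α f - s) * (α f - s - R) := Finset.sum_nonneg fun f _ => h3 f
    have h5 : ∑ f, (α f - s) * (α f - s - R)
        = (∑ f, α f ^ 2) - (2 * s + R) * (∑ f, α f) + Q * (s * (s + R)) := by
      have : ∀ f, (α f - s) * (α f - s - R)
        = α f ^ 2 - (2 * s + R) * α f + s * (s + R) := fun f => by ring
      simp_rw [this]
      rw [Finset.sum_add_distrib, Finset.sum_sub_distrib, Finset.mul_sum, Finset.sum_const,
        Finset.card_univ, nsmul_eq_mul, ← hQ]
    rw [h5] at h4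
    have h6 := mul_nonneg h4 (sq_nonneg K)
    have h7 : ((∑ f, α f ^ 2) - (2 * s + R) * (∑ f, α f) + Q * (s * (s + R))) * K ^ 2
      = Q * (n * (K - 1) - (n - s * K) * (R * K - (n - s * K))) := by
      linear_combination h2 - (2 * s + R) * K * h1
    rw [h7] at h6
    have := nonneg_of_mul_nonneg_right h6 hQ0
    linarith

section
variable {F : Type} [Field F] [Fintype F]

lemma itb_card {V : Type*} [AddCommGroup V] [Module F V] [Finite V] :
    Nat.card V = Fintype.card F ^ finrank F V := by
  have := Fintype.ofFinite V
  rw [Nat.card_eq_fintype_card, Module.card_eq_pow_finrank (K := F)]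

lemma itb_nonker {V : Type*} [AddCommGroup V] [Module F V] [Finite V] (g : V →ₗ[F] F)
    (hg : g ≠ 0) :
    Nat.card {x : V // g x ≠ 0} = (Fintype.card F - 1) * Fintype.card F ^ (finrank F V - 1) := by
  have h1 : finrank F (LinearMap.ker g) + 1 = finrank F V := by
    have := LinearMap.finrank_range_add_finrank_ker g
    have h2 : LinearMap.range g = ⊤ := LinearMap.range_eq_top.2 (LinearMap.surjective hg)
    rw [h2, finrank_top, finrank_self] at this
    omega
  have h2 := itb_card (F := F) (V := V)
  have h3 := itb_card (F := F) (V := LinearMap.ker g)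
  have h4 : Nat.card V = Nat.card {x : V // g x = 0} + Nat.card {x : V // ¬ g x = 0} := by
    classical
    rw [← Nat.card_sum]
    exact Nat.card_congr (Equiv.sumCompl _).symm
  have h5 : Nat.card {x : V // g x = 0} = Nat.card (LinearMap.ker g) := rfl
  rw [h5, h3, h2, ← h1, pow_succ] at h4
  rw [← h1, Nat.add_sub_cancel, Nat.sub_mul, one_mul, mul_comm]
  exact (Nat.sub_eq_of_eq_add' h4).symm

lemma itb_ann {v : ℕ} (U : Submodule F (Fin v → F)) :
    Nat.card {f : Dual F (Fin v → F) // U ≤ LinearMap.ker f} * Fintype.card F ^ finrank F U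
      = Fintype.card F ^ v := by
  have : Finite (Dual F (Fin v → F)) := Module.finite_of_finite F
  have h1 : Nat.card {f : Dual F (Fin v → F) // U ≤ LinearMap.ker f}
      = Nat.card U.dualAnnihilator := by
    apply Nat.card_congr
    apply Equiv.subtypeEquivRight
    intro f
    rw [Submodule.mem_dualAnnihilator]
    rfl
  rw [h1, itb_card (F := F), ← pow_add]
  congr 1
  have := Subspace.finrank_add_finrank_dualAnnihilator_eq U
  simp at this
  omega

open Classical in
lemma itb_dvd {v : ℕ} (P : Finset (Submodule F (Fin v → F)))
    (hpart : ∀ x : Fin v → F, x ≠ 0 →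
      ∃! U : Submodule F (Fin v → F), U ∈ P ∧ x ∈ U) (k r : ℕ) (hk : 1 ≤ k)
    (hv : k + r ≤ v)
    (hP : ∀ U ∈ P, finrank F U = k ∨ k + r ≤ finrank F U)
    (f : Dual F (Fin v → F)) :
    Fintype.card F ^ r ∣ ((P.filter (fun U : Submodule F (Fin v → F) => finrank F U = k)).filter
      (fun U => ¬ U ≤ LinearMap.ker f)).card := by
  have hq : 1 < Fintype.card F := Fintype.one_lt_card
  by_cases hf : f = 0
  · subst hf
    simp
  have h0 := itb_nonker f hf
  have h1 : Nat.card {x : Fin v → F // f x ≠ 0} =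
      ∑ U ∈ P, Nat.card {x : U // f.comp U.subtype x ≠ 0} := by
    have e1 : ∀ U : Submodule F (Fin v → F), Nat.card {x : U // f.comp U.subtype x ≠ 0}
        = (Finset.univ.filter (fun x : Fin v → F => x ∈ U ∧ f x ≠ 0)).card := by
      intro U
      rw [← Fintype.card_subtype, ← Nat.card_eq_fintype_card]
      exact Nat.card_congr (Equiv.subtypeSubtypeEquivSubtypeInter (fun x => x ∈ U) (fun x => f x ≠ 0))
    simp_rw [e1]
    rw [← Finset.card_biUnion]
    · rw [Nat.card_eq_fintype_card, Fintype.card_subtype]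
      congr 1
      ext x
      simp only [Finset.mem_filter, Finset.mem_univ, true_and, Finset.mem_biUnion]
      constructor
      · intro hx
        have hx0 : x ≠ 0 := by rintro rfl; simp at hx
        obtain ⟨U, ⟨hU, hxU⟩, -⟩ := hpart x hx0
        exact ⟨U, hU, hxU, hx⟩
      · rintro ⟨U, _, _, hx⟩; exact hx
    · intro U hU W hW hne
      change Disjoint _ _
      rw [Finset.disjoint_left]
      intro x hx hx'
      simp only [Finset.mem_filter, Finset.mem_univ, true_and] at hx hx'
      have hx0 : x ≠ 0 := by rintro rfl; simp at hx
      exact hne ((hpart x hx0).unique ⟨hU, hx.1⟩ ⟨hW, hx'.1⟩)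
  have h2 : ∀ U : Submodule F (Fin v → F), Nat.card {x : U // f.comp U.subtype x ≠ 0}
      = (Fintype.card F - 1) * if ¬ U ≤ LinearMap.ker f then
        Fintype.card F ^ (finrank F U - 1) else 0 := by
    intro U
    split_ifs with h
    · have : ∀ x : U, f x = 0 := fun x => h x.2
      simp [this]
    · apply itb_nonker
      intro h'
      apply h
      intro x hx
      exact congrArg (fun g => g ⟨x, hx⟩) h'
  simp_rw [h2] at h1
  rw [h0, ← Finset.mul_sum] at h1
  have h3 := Nat.eq_of_mul_eq_mul_left (by omega) h1
  rw [← Finset.sum_filter_add_sum_filter_not P (fun U : Submodule F (Fin v → F) => finrank F U = k)] at h3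
  have h4 : ∑ U ∈ P.filter (fun U : Submodule F (Fin v → F) => finrank F U = k), (if ¬ U ≤ LinearMap.ker f then
        Fintype.card F ^ (finrank F U - 1) else 0) =
        ((P.filter (fun U : Submodule F (Fin v → F) => finrank F U = k)).filter
      (fun U => ¬ U ≤ LinearMap.ker f)).card * Fintype.card F ^ (k - 1) := by
    rw [← Finset.sum_filter, Finset.sum_const_nat]
    intro U hU
    simp only [Finset.mem_filter] at hU
    rw [hU.1.2]
  rw [h4] at h3
  have h5 : Fintype.card F ^ (k + r - 1) ∣ ∑ U ∈ P.filter (fun U : Submodule F (Fin v → F) => ¬ finrank F U = k),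
      (if ¬ U ≤ LinearMap.ker f then Fintype.card F ^ (finrank F U - 1) else 0) := by
    apply Finset.dvd_sum
    intro U hU
    simp only [Finset.mem_filter] at hU
    split_ifs
    · exact dvd_zero _
    · apply pow_dvd_pow
      have := hP U hU.1
      omega
  have h6 : Fintype.card F ^ (k + r - 1) ∣ Fintype.card F ^ (finrank F (Fin v → F) - 1) := by
    apply pow_dvd_pow
    simp
    omega
  rw [h3] at h6
  have h7 := (Nat.dvd_add_left h5).1 h6
  have h8 : k + r - 1 = r + (k - 1) := by omega
  rw [h8, pow_add] at h7
  exact Nat.dvd_of_mul_dvd_mul_right (by positivity) h7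

open Classical in
lemma itb_main {v : ℕ} (P : Finset (Submodule F (Fin v → F)))
    (hpart : ∀ x : Fin v → F, x ≠ 0 →
      ∃! U : Submodule F (Fin v → F), U ∈ P ∧ x ∈ U) (k r : ℕ) (hk : 1 ≤ k)
    (hv : k + r ≤ v)
    (hP : ∀ U ∈ P, finrank F U = k ∨ k + r ≤ finrank F U)
    (n q : ℤ) (hn : n = (P.filter (fun U : Submodule F (Fin v → F) => finrank F U = k)).card)
    (hq : q = Fintype.card F) :
    0 ≤ n - (n % q ^ r) * q ^ k ∧
    (n - (n % q ^ r) * q ^ k) * (q ^ r * q ^ k - (n - (n % q ^ r) * q ^ k)) ≤ n * (q ^ k - 1) := by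
  have hfin : Finite (Dual F (Fin v → F)) := Module.finite_of_finite F
  have := Fintype.ofFinite (Dual F (Fin v → F))
  have hq1 : 0 < q := by rw [hq]; exact_mod_cast Fintype.card_pos
  set S := P.filter (fun U : Submodule F (Fin v → F) => finrank F U = k) with hS
  let ι : Submodule F (Fin v → F) → Dual F (Fin v → F) → ℤ :=
    fun U f => if U ≤ LinearMap.ker f then 1 else 0
  have hι : ∀ U, (∑ f, ι U f) * q ^ finrank F U = q ^ v := by
    intro U
    have h := itb_ann U
    rw [Nat.card_eq_fintype_card, Fintype.card_subtype] at h
    simp only [ι, Finset.sum_boole]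
    rw [hq]
    exact_mod_cast h
  have hmul : ∀ U W f, ι U f * ι W f = ι (U ⊔ W) f := by
    intro U W f
    simp only [ι, sup_le_iff]
    split_ifs <;> simp_all
  have hdis : ∀ U ∈ S, ∀ W ∈ S, U ≠ W → finrank F ↥(U ⊔ W) = k + k := by
    intro U hU W hW hne
    simp only [hS, Finset.mem_filter] at hU hW
    have h1 := Submodule.finrank_sup_add_finrank_inf_eq U W
    have h2 : U ⊓ W = ⊥ := by
      rw [Submodule.eq_bot_iff]
      intro x hx
      by_contra hx0
      exact hne ((hpart x hx0).unique ⟨hU.1, hx.1⟩ ⟨hW.1, hx.2⟩)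
    rw [h2, finrank_bot, hU.2, hW.2] at h1
    omega
  have hSk : ∀ U ∈ S, finrank F U = k := fun U hU => by
    simp only [hS, Finset.mem_filter] at hU
    exact hU.2
  apply itb_sum (fun f => ∑ U ∈ S, ι U f) n (q ^ k) (q ^ r) (q ^ v)
  · have h := itb_card (F := F) (V := Dual F (Fin v → F))
    rw [Nat.card_eq_fintype_card, Subspace.dual_finrank_eq] at h
    simp at h
    rw [h, hq]
    push_cast
    rfl
  · positivity
  · intro f
    apply Finset.sum_nonneg
    intro U _
    simp only [ι]
    split_ifs <;> simp
  · intro f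
    have h := itb_dvd P hpart k r hk hv hP f
    rw [← hS] at h
    have h2 := Finset.card_filter_add_card_filter_not (s := S) (fun U => U ≤ LinearMap.ker f)
    have e : n - ∑ U ∈ S, ι U f = ((S.filter (fun U => ¬ U ≤ LinearMap.ker f)).card : ℤ) := by
      simp only [ι, Finset.sum_boole]
      rw [hn, ← h2]
      push_cast
      ring
    rw [e, hq]
    exact_mod_cast h
  · rw [Finset.sum_comm, Finset.sum_mul]
    rw [Finset.sum_congr rfl (g := fun _ => q ^ v)]
    · simp [hn]
    · intro U hU
      have := hι U
      rwa [hSk U hU] at this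
  · have e1 : ∑ f, (∑ U ∈ S, ι U f) ^ 2 = ∑ U ∈ S, ∑ W ∈ S, ∑ f, ι (U ⊔ W) f := by
      simp_rw [sq, Finset.sum_mul_sum, hmul]
      rw [Finset.sum_comm]
      apply Finset.sum_congr rfl
      intro U _
      rw [Finset.sum_comm]
    rw [e1, Finset.sum_mul]
    have e2 : ∀ U ∈ S, (∑ W ∈ S, ∑ f, ι (U ⊔ W) f) * (q ^ k) ^ 2
        = q ^ k * q ^ v + (n - 1) * q ^ v := by
      intro U hU
      rw [← Finset.add_sum_erase S _ hU, add_mul, sup_idem]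
      congr 1
      · have := hι U
        rw [hSk U hU] at this
        linear_combination q ^ k * this
      · rw [Finset.sum_mul, Finset.sum_congr rfl (g := fun _ => q ^ v)]
        · rw [Finset.sum_const, nsmul_eq_mul, Finset.card_erase_of_mem hU, hn,
            Nat.cast_sub (Finset.card_pos.2 ⟨U, hU⟩)]
          simp
        · intro W hW
          have := hι (U ⊔ W)
          rw [hdis U hU W (Finset.mem_of_mem_erase hW) (Finset.ne_of_mem_erase hW).symm] at this
          rw [← this]; ring
    rw [Finset.sum_congr rfl e2, Finset.sum_const, nsmul_eq_mul, ← hn]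
    ring
  · positivity

end


/-- Improved bound: if `d_2 - d_1 = a·d_1 + b` with `a ≥ 1` and `0 < b < d_1`, then
`u_1 ≥ (q^{(a+2)d_1}-1)/(q^{d_1}-1)`. Here `d 0 = d_1`, `d 1 = d_2`. -/
theorem improved_tail_bound
    {F : Type} [Field F] [Fintype F] (q v l : ℕ)
    (hq : q = Fintype.card F) (hl : 2 ≤ l)
    (d u : Fin l → ℕ) (hd : StrictMono d) (hd1 : 1 ≤ d ⟨0, by omega⟩)
    (hu1 : 0 < u ⟨0, by omega⟩) (hu2 : 0 < u ⟨1, by omega⟩)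
    (P : Finset (Submodule F (Fin v → F)))
    (hpart : ∀ x : Fin v → F, x ≠ 0 →
      ∃! U : Submodule F (Fin v → F), U ∈ P ∧ x ∈ U)
    (htype : ∀ U ∈ P, ∃ i : Fin l, Module.finrank F ↥U = d i)
    (hcount : ∀ i : Fin l, u i = Set.ncard
      {U : Submodule F (Fin v → F) | U ∈ P ∧ Module.finrank F ↥U = d i})
    (a b : ℕ) (ha : 1 ≤ a) (hb0 : 0 < b) (hbd : b < d ⟨0, by omega⟩)
    (hab : d ⟨1, by omega⟩ - d ⟨0, by omega⟩ = a * d ⟨0, by omega⟩ + b) :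
    (q ^ ((a + 2) * d ⟨0, by omega⟩) - 1) / (q ^ d ⟨0, by omega⟩ - 1) ≤ u ⟨0, by omega⟩ := by
  classical
  set k := d ⟨0, by omega⟩ with hkdef
  have hq1 : 2 ≤ q := by rw [hq]; exact Fintype.one_lt_card
  have hlt : k < d ⟨1, by omega⟩ := hd (by simp [Fin.lt_def])
  have hd2 : d ⟨1, by omega⟩ = k + (a * k + b) := by omega
  have hS : u ⟨0, by omega⟩ =
      (P.filter (fun U : Submodule F (Fin v → F) => Module.finrank F U = k)).card := by
    rw [hcount, ← Set.ncard_coe_finset]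
    congr 1
    ext U
    simp [hkdef]
  have hv : k + (a * k + b) ≤ v := by
    rw [hcount] at hu2
    obtain ⟨U, hU⟩ := Set.nonempty_of_ncard_ne_zero hu2.ne'
    have h := Submodule.finrank_le U
    rw [hU.2, hd2] at h
    simpa using h
  have hP : ∀ U ∈ P, Module.finrank F U = k ∨ k + (a * k + b) ≤ Module.finrank F U := by
    intro U hU
    obtain ⟨i, hi⟩ := htype U hU
    rw [hi]
    by_cases h0 : i = ⟨0, by omega⟩
    · left; rw [h0]
    · right
      rw [← hd2]
      apply hd.monotone
      rw [Fin.le_def]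
      have : i.val ≠ 0 := fun h => h0 (Fin.ext h)
      simp only
      omega
  obtain ⟨h1, h2⟩ := itb_main P hpart k (a * k + b) hd1 hv hP (u ⟨0, by omega⟩ : ℤ) (q : ℤ)
    (by rw [hS]) (by rw [hq])
  generalize hN : u ⟨0, by omega⟩ = N at *
  have hqz : (2 : ℤ) ≤ q := by exact_mod_cast hq1
  have hp : ∀ j : ℕ, j ≠ 0 → (q : ℤ) ≤ (q : ℤ) ^ j := fun j hj => le_self_pow₀ (by linarith) hj
  have hBC : (q : ℤ) ^ b * (q : ℤ) ^ (k - b) = (q : ℤ) ^ k := by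
    rw [← pow_add]; congr 1; omega
  have hB : (2 : ℤ) ≤ (q : ℤ) ^ b := hqz.trans (hp b (by omega))
  have hC : (2 : ℤ) ≤ (q : ℤ) ^ (k - b) := hqz.trans (hp _ (by omega))
  have hK : (4 : ℤ) ≤ (q : ℤ) ^ k := by rw [← hBC]; nlinarith
  have hA : (q : ℤ) ^ k ≤ ((q : ℤ) ^ k) ^ a := le_self_pow₀ (by linarith) (by omega)
  have hR : (q : ℤ) ^ (a * k + b) = ((q : ℤ) ^ k) ^ a * (q : ℤ) ^ b := by
    rw [pow_add, mul_comm a k, pow_mul]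
  obtain ⟨w, hw⟩ : ((q : ℤ) ^ k - 1) ∣ ((q : ℤ) ^ k) ^ a - 1 := by
    simpa using sub_dvd_pow_sub_pow ((q : ℤ) ^ k) 1 a
  have hRpos : (0 : ℤ) < (q : ℤ) ^ (a * k + b) := by positivity
  rw [hR] at h1 h2 hRpos
  have key := itb_arith (N : ℤ) ((q : ℤ) ^ k) (((q : ℤ) ^ k) ^ a) ((q : ℤ) ^ b)
    ((q : ℤ) ^ (k - b)) _ (N / (((q : ℤ) ^ k) ^ a * (q : ℤ) ^ b)) _ w hK hA hB hBC hw
    (by exact_mod_cast hu1) (Int.ediv_mul_add_emod _ _).symm (Int.emod_nonneg _ hRpos.ne')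
    (Int.ediv_nonneg (by positivity) hRpos.le) rfl h1 h2
  have hK1 : 1 ≤ q ^ k := Nat.one_le_pow _ _ (by omega)
  apply Nat.div_le_of_le_mul
  have e : (((q : ℤ) ^ k) ^ a) * ((q : ℤ) ^ k) ^ 2 = (q : ℤ) ^ ((a + 2) * k) := by
    rw [← pow_add, ← pow_mul, mul_comm k]
  rw [e] at key
  have hK2 : 1 ≤ q ^ ((a + 2) * k) := Nat.one_le_pow _ _ (by omega)
  zify [hK1, hK2]
  linarith
end

section
/- Let P be a vector space partition of F_q^v of type d_l^{u_l}⋯d_2^{u_2}d_1^{u_1}, where u_1, u_2 > 0 and d_l > ⋯ > d_2 > d_1 ≥ 1. If q^{d_2−d_1} does not divide u_1, then u_1 ≥ q^{d_1} + 1 (no assumption on the relation between d_2 and 2d_1 is needed). -/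
theorem heden_aux_fiber {F W : Type} [Field F] [Fintype F] [AddCommGroup W] [Module F W]
    [Finite W] (g : Module.Dual F W) (hg : g ≠ 0) :
    Nat.card {w : W // g w = 1} = Fintype.card F ^ (Module.finrank F W - 1) := by
  classical
  have hfin : Module.Finite F W := Module.Finite.of_finite
  have hs : ∃ w, g w = 1 := by
    obtain ⟨w, hw⟩ : ∃ w, g w ≠ 0 := by
      by_contra! h
      exact hg (LinearMap.ext h)
    exact ⟨(g w)⁻¹ • w, by simp [hw]⟩
  obtain ⟨w0, hw0⟩ := hs
  have e : {w : W // g w = 1} ≃ LinearMap.ker g :=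
    { toFun := fun w => ⟨w.1 - w0, by simp [w.2, hw0]⟩
      invFun := fun k => ⟨k.1 + w0, by
        have := k.2
        rw [LinearMap.mem_ker] at this
        simp [this, hw0]⟩
      left_inv := fun w => by simp
      right_inv := fun w => by simp }
  rw [Nat.card_congr e, Module.natCard_eq_pow_finrank (K := F), Nat.card_eq_fintype_card]
  have := Module.Dual.finrank_ker_add_one_of_ne_zero hg
  congr 1
  omega


/-- If `q^{d_2-d_1} ∤ u_1` then `u_1 ≥ q^{d_1} + 1`, without any assumption relating `d_2`
and `2d_1`. Here `d 0 = d_1`, `d 1 = d_2`. -/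
theorem heden_tail_i_general
    {F : Type} [Field F] [Fintype F] (q v l : ℕ)
    (hq : q = Fintype.card F) (hl : 2 ≤ l)
    (d u : Fin l → ℕ) (hd : StrictMono d) (hd1 : 1 ≤ d ⟨0, by omega⟩)
    (hu1 : 0 < u ⟨0, by omega⟩) (hu2 : 0 < u ⟨1, by omega⟩)
    (P : Finset (Submodule F (Fin v → F)))
    (hpart : ∀ x : Fin v → F, x ≠ 0 →
      ∃! U : Submodule F (Fin v → F), U ∈ P ∧ x ∈ U)
    (htype : ∀ U ∈ P, ∃ i : Fin l, Module.finrank F ↥U = d i)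
    (hcount : ∀ i : Fin l, u i = Set.ncard
      {U : Submodule F (Fin v → F) | U ∈ P ∧ Module.finrank F ↥U = d i})
    (hndvd : ¬ q ^ (d ⟨1, by omega⟩ - d ⟨0, by omega⟩) ∣ u ⟨0, by omega⟩) :
    q ^ d ⟨0, by omega⟩ + 1 ≤ u ⟨0, by omega⟩ := by
  classical
  set d1 := d ⟨0, by omega⟩ with hd1def
  set d2 := d ⟨1, by omega⟩ with hd2def
  set u1 := u ⟨0, by omega⟩ with hu1def
  have hd12 : d1 < d2 := hd (by simp)
  have hq1 : 1 < q := hq ▸ Fintype.one_lt_card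
  have hge : ∀ U ∈ P, Module.finrank F U ≠ d1 → d2 ≤ Module.finrank F U := by
    intro U hU hne
    obtain ⟨i, hi⟩ := htype U hU
    rw [hi]
    apply hd.monotone
    rw [Fin.le_def]
    by_contra hlt
    apply hne
    rw [hi, hd1def]
    congr 1
    ext
    simp only at hlt ⊢
    omega
  have hd2v : d2 ≤ v := by
    have h := hcount ⟨1, by omega⟩
    rw [h, Set.ncard_pos] at hu2
    obtain ⟨U, hU, hUd⟩ := hu2
    have := Submodule.finrank_le U
    rw [hUd] at this
    simpa using this
  set N := P.filter (fun U : Submodule F (Fin v → F) => Module.finrank F ↥U = d1) with hN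
  have hNcard : N.card = u1 := by
    rw [hu1def, hcount, ← Set.ncard_coe_finset]
    congr 1
    ext U
    simp [hN, hd1def]
  have key : ∀ f : Module.Dual F (Fin v → F), f ≠ 0 → ∃ U ∈ N, U ≤ LinearMap.ker f := by
    intro f hf
    by_contra! hno
    let c : Submodule F (Fin v → F) → ℕ := fun U =>
      (Finset.univ.filter (fun x : Fin v → F => x ∈ U ∧ f x = 1)).card
    have hc : ∀ U, ¬ U ≤ LinearMap.ker f → c U = q ^ (Module.finrank F U - 1) := by
      intro U hU
      have hg : f.domRestrict U ≠ 0 := by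
        intro h
        apply hU
        intro x hx
        exact LinearMap.congr_fun h ⟨x, hx⟩
      rw [hq, ← heden_aux_fiber (f.domRestrict U) hg]
      have e : {w : U // f.domRestrict U w = 1} ≃ {x : Fin v → F // x ∈ U ∧ f x = 1} :=
        { toFun := fun w => ⟨w.1.1, w.1.2, w.2⟩
          invFun := fun x => ⟨⟨x.1, x.2.1⟩, x.2.2⟩
          left_inv := fun w => rfl
          right_inv := fun w => rfl }
      rw [Nat.card_congr e, Nat.card_eq_fintype_card, Fintype.card_subtype]
    have hc0 : ∀ U, U ≤ LinearMap.ker f → c U = 0 := by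
      intro U hU
      simp only [c, Finset.card_eq_zero, Finset.filter_eq_empty_iff]
      rintro x - ⟨hx, h1⟩
      have := hU hx
      rw [LinearMap.mem_ker, h1] at this
      exact one_ne_zero this
    have htot : ∑ U ∈ P, c U = q ^ (v - 1) := by
      have h1 := heden_aux_fiber f hf
      rw [← hq, Nat.card_eq_fintype_card, Fintype.card_subtype, Module.finrank_fin_fun] at h1
      rw [← h1, ← Finset.card_biUnion]
      · congr 1
        ext x
        simp only [Finset.mem_biUnion, Finset.mem_filter, Finset.mem_univ, true_and]
        constructor
        · rintro ⟨U, _, _, h⟩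
          exact h
        · intro h
          have hx : x ≠ 0 := by
            rintro rfl
            simp at h
          obtain ⟨U, ⟨hU, hxU⟩, _⟩ := hpart x hx
          exact ⟨U, hU, hxU, h⟩
      · intro U hU V hV hUV
        rw [Function.onFun, Finset.disjoint_left]
        intro x hx hx'
        simp only [Finset.mem_filter, Finset.mem_univ, true_and] at hx hx'
        have hx0 : x ≠ 0 := by
          rintro rfl
          simp at hx
        exact hUV ((hpart x hx0).unique ⟨hU, hx.1⟩ ⟨hV, hx'.1⟩)
    rw [← Finset.sum_filter_add_sum_filter_not P (fun U : Submodule F (Fin v → F) => Module.finrank F ↥U = d1)] at htot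
    have hA : ∑ U ∈ P.filter (fun U : Submodule F (Fin v → F) => Module.finrank F ↥U = d1), c U = u1 * q ^ (d1 - 1) := by
      rw [← hNcard, ← smul_eq_mul, ← Finset.sum_const]
      apply Finset.sum_congr rfl
      intro U hU
      rw [hc U (hno U hU), (Finset.mem_filter.1 hU).2]
    have hB : q ^ (d2 - 1) ∣ ∑ U ∈ P.filter (fun U : Submodule F (Fin v → F) => ¬ Module.finrank F ↥U = d1), c U := by
      apply Finset.dvd_sum
      intro U hU
      rw [Finset.mem_filter] at hU
      by_cases h : U ≤ LinearMap.ker f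
      · rw [hc0 U h]; exact dvd_zero _
      · rw [hc U h]
        have := hge U hU.1 hU.2
        exact pow_dvd_pow _ (by omega)
    have hC : q ^ (d2 - 1) ∣ u1 * q ^ (d1 - 1) := by
      rw [← hA]
      refine (Nat.dvd_add_left hB).1 ?_
      rw [htot]
      exact pow_dvd_pow _ (by omega)
    apply hndvd
    have : d2 - 1 = (d2 - d1) + (d1 - 1) := by omega
    rw [this, pow_add] at hC
    exact Nat.dvd_of_mul_dvd_mul_right (by positivity) hC
  -- counting functionals
  have : Finite (Module.Dual F (Fin v → F)) := Module.finite_of_finite F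
  have : Fintype (Module.Dual F (Fin v → F)) := Fintype.ofFinite _
  let A : Submodule F (Fin v → F) → Finset (Module.Dual F (Fin v → F)) := fun U =>
    (Finset.univ.filter (fun f => f ∈ U.dualAnnihilator)).erase 0
  have hAc : ∀ U ∈ N, (A U).card ≤ q ^ (v - d1) - 1 := by
    intro U hU
    have hUd := (Finset.mem_filter.1 hU).2
    rw [Finset.card_erase_of_mem (by simp)]
    have h1 : (Finset.univ.filter (fun f => f ∈ U.dualAnnihilator)).card
        = q ^ (v - d1) := by
      rw [← Fintype.card_subtype, ← Nat.card_eq_fintype_card]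
      have h2 := Module.natCard_eq_pow_finrank (K := F) (V := U.dualAnnihilator)
      have h3 := Subspace.finrank_add_finrank_dualAnnihilator_eq U
      rw [Module.finrank_fin_fun, hUd] at h3
      rw [Nat.card_eq_fintype_card (α := F), ← hq] at h2
      have h4 : Module.finrank F U.dualAnnihilator = v - d1 := by omega
      rw [h4] at h2
      exact h2
    rw [h1]
  have hle := Finset.card_biUnion_le_card_mul N A _ hAc
  have hsub : (Finset.univ : Finset (Module.Dual F (Fin v → F))).erase 0 ⊆ N.biUnion A := by
    intro f hf
    have hf0 := Finset.ne_of_mem_erase hf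
    obtain ⟨U, hU, hUf⟩ := key f hf0
    rw [Finset.mem_biUnion]
    refine ⟨U, hU, ?_⟩
    simp only [A, Finset.mem_erase, Finset.mem_filter, Finset.mem_univ, true_and]
    refine ⟨hf0, ?_⟩
    rw [Submodule.mem_dualAnnihilator]
    exact fun w hw => hUf hw
  have hcard : (Finset.univ.erase (0 : Module.Dual F (Fin v → F))).card = q ^ v - 1 := by
    rw [Finset.card_erase_of_mem (Finset.mem_univ _), Finset.card_univ,
      ← Nat.card_eq_fintype_card, Module.natCard_eq_pow_finrank (K := F),
      Subspace.dual_finrank_eq, Module.finrank_fin_fun, Nat.card_eq_fintype_card, ← hq]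
  have h5 := (Finset.card_le_card hsub).trans hle
  rw [hcard, hNcard] at h5
  by_contra! hlt
  have h6 : u1 * (q ^ (v - d1) - 1) ≤ q ^ d1 * (q ^ (v - d1) - 1) :=
    Nat.mul_le_mul_right _ (by omega)
  rw [Nat.mul_sub (q ^ d1), ← pow_add, mul_one, Nat.add_sub_cancel' (by omega)] at h6
  have h7 : 1 < q ^ d1 := Nat.one_lt_pow (by omega) hq1
  have h8 : q ^ d1 ≤ q ^ v := Nat.pow_le_pow_right (by omega) (by omega)
  omega
end
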